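/- arXiv:2405.05818 — 3 statements merged into one kernel-verified Lean document; each statement's English description precedes it below -/
import Mathlib

section
/- Let σ₁ ≥ σ₂ ≥ … ≥ σ_n > 0, let 1 ≤ ℓ ≤ n be arbitrary, and set λ = (1/ℓ)·Σ_{i>ℓ} σ_i². Then: Σ_{i=1}^n σ_i²/(σ_i² + λ) ≤ 2ℓ. (Consequently, the expected size of a determinantal point process sample from DPP((1/λ)·AAᵀ), which equals Σ_{i=1}^n σ_i²/(σ_i²+λ) for a matrix A with these singular values, is at most 2ℓ.) -/
open Finset

/-!
Split the sum at `ℓ`. Each of the first `ℓ` terms is at most `1`, since `λ ≥ 0`. In the tail,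
dropping `σ i ^ 2` from the denominator bounds each term by `σ i ^ 2 / λ`, and by the choice of `λ`
these bounds add up to exactly `ℓ`.
-/

/-- **Expected DPP sample size bound.**
If `σ 1 ≥ σ 2 ≥ … ≥ σ n > 0`, `1 ≤ ℓ ≤ n`, and `λ = (1/ℓ)·∑_{i>ℓ} σ i ^ 2`, then
`∑_{i=1}^n σ i ^ 2 / (σ i ^ 2 + λ) ≤ 2ℓ`; this quantity is the expected size of a sample
from `DPP((1/λ)·A·Aᵀ)` for a matrix `A` with singular values `σ 1, …, σ n`. -/
theorem dpp_expected_size_le (n ℓ : ℕ) (σ : ℕ → ℝ)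
    (hpos : ∀ i, 1 ≤ i → i ≤ n → 0 < σ i)
    (hdec : ∀ i j, 1 ≤ i → i ≤ j → j ≤ n → σ j ≤ σ i)
    (hℓ1 : 1 ≤ ℓ) (hℓn : ℓ ≤ n) :
    ∑ i ∈ Icc 1 n, σ i ^ 2 / (σ i ^ 2 + (ℓ : ℝ)⁻¹ * ∑ i ∈ Icc (ℓ + 1) n, σ i ^ 2)
      ≤ 2 * ℓ := by
  have hℓ : (0 : ℝ) < ℓ := by exact_mod_cast hℓ1
  set S : ℝ := ∑ i ∈ Icc (ℓ + 1) n, σ i ^ 2 with hS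
  have hS0 : 0 ≤ S := sum_nonneg fun i _ => sq_nonneg _
  have hlam : 0 ≤ (ℓ : ℝ)⁻¹ * S := by positivity
  have hsplit : Icc 1 n = Icc 1 ℓ ∪ Icc (ℓ + 1) n := by
    ext i
    simp only [mem_union, mem_Icc]
    omega
  have hdisj : Disjoint (Icc 1 ℓ) (Icc (ℓ + 1) n) := by
    rw [disjoint_left]
    intro i
    simp only [mem_Icc]
    omega
  have hhead : ∑ i ∈ Icc 1 ℓ, σ i ^ 2 / (σ i ^ 2 + (ℓ : ℝ)⁻¹ * S) ≤ ℓ := by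
    calc ∑ i ∈ Icc 1 ℓ, σ i ^ 2 / (σ i ^ 2 + (ℓ : ℝ)⁻¹ * S)
        ≤ ∑ i ∈ Icc 1 ℓ, (1 : ℝ) :=
          sum_le_sum fun i _ => div_le_one_of_le₀ (by linarith) (by positivity)
      _ = ℓ := by simp
  have htail : ∑ i ∈ Icc (ℓ + 1) n, σ i ^ 2 / (σ i ^ 2 + (ℓ : ℝ)⁻¹ * S) ≤ ℓ := by
    -- For `ℓ = n` the tail is empty; otherwise `λ > 0`, so dividing by `λ` is legitimate.
    rcases hℓn.eq_or_lt with h | h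
    · simp [h]
    · have hSpos : 0 < S :=
        sum_pos (fun i hi => by
          rw [mem_Icc] at hi
          exact pow_pos (hpos i (by omega) hi.2) 2) (nonempty_Icc.2 h)
      calc ∑ i ∈ Icc (ℓ + 1) n, σ i ^ 2 / (σ i ^ 2 + (ℓ : ℝ)⁻¹ * S)
          ≤ ∑ i ∈ Icc (ℓ + 1) n, σ i ^ 2 / ((ℓ : ℝ)⁻¹ * S) :=
            sum_le_sum fun i _ => div_le_div_of_nonneg_left (sq_nonneg _) (by positivity)
              (by linarith [sq_nonneg (σ i)])
        _ = S / ((ℓ : ℝ)⁻¹ * S) := by rw [← sum_div]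
        _ = ℓ := by field_simp
  rw [hsplit, sum_union hdisj]
  linarith
end

section
/- Let B ∈ ℝ^{k×m}, let Ũ ∈ ℝ^{m×n} be a matrix with columns ũ₁, …, ũ_n, let σ₁ ≥ σ₂ ≥ … ≥ σ_n ≥ 0, and suppose 2k ≤ n. Write Ũ_{1:t} for the m×t matrix of the first t columns of Ũ, and let σ_min(M) denote the k-th largest singular value of a k×t matrix M (t ≥ k). Then, in the Loewner order on k×k symmetric matrices: Σ_{t=1}^n σ_t²·(B ũ_t)(B ũ_t)ᵀ ⪰ ( Σ_{t=2k}^{n−1} (σ_t² − σ_{t+1}²)·σ_min²(B Ũ_{1:t}) + σ_n²·σ_min²(B Ũ) )·I_k. -/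
/-!
Testing the matrix inequality on a vector `x`, put `c j = ((BŨ)ᵀ x)_j ^ 2` and
`S t = c 0 + ⋯ + c (t - 1) = ‖(B Ũ_{1:t})ᵀ x‖²`. Summation by parts (`abel_sum`) turns the quadratic
form `∑ σ_t² c_{t-1}` into `σ_n² S n + ∑_{t=1}^{n-1} (σ_t² - σ_{t+1}²) S t`. All the weights are
nonnegative, so the terms with `t < 2k` may be dropped, and in the others
`S t ≥ σ_min²(B Ũ_{1:t}) ‖x‖²` by the variational definition of `σ_min` (`sMinSq_mul_le`).
-/

open Finset Matrix

noncomputable section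

/-- Squared smallest singular value of a `k × t` matrix (the `k`-th largest singular value,
for `k ≤ t`): the minimum of `‖Mᵀ v‖²` over unit vectors `v ∈ ℝ^k`. -/
def sMinSq {k t : Type*} [Fintype k] [Fintype t] (M : Matrix k t ℝ) : ℝ :=
  sInf {r : ℝ | ∃ v : k → ℝ, ∑ i, v i ^ 2 = 1 ∧ r = ∑ j, (Mᵀ.mulVec v j) ^ 2}

/-- The `m × t` matrix consisting of the first `t` columns of an `m × n` matrix
(columns beyond the `n`-th, if any, are zero). -/
def firstCols {m n : ℕ} (U : Matrix (Fin m) (Fin n) ℝ) (t : ℕ) :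
    Matrix (Fin m) (Fin t) ℝ :=
  Matrix.of fun i j => if h : (j : ℕ) < n then U i ⟨(j : ℕ), h⟩ else 0

/-- The variational bound `σ_min²(M) ‖x‖² ≤ ‖Mᵀ x‖²`, for vectors of arbitrary length. -/
lemma sMinSq_mul_le {k t : Type*} [Fintype k] [Fintype t] (M : Matrix k t ℝ) (x : k → ℝ) :
    sMinSq M * ∑ i, x i ^ 2 ≤ ∑ j, (Mᵀ.mulVec x j) ^ 2 := by
  set s := ∑ i, x i ^ 2 with hs
  have hs0 : 0 ≤ s := Finset.sum_nonneg fun i _ => sq_nonneg _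
  rcases hs0.eq_or_lt with h0 | hpos
  · rw [← h0, mul_zero]
    exact Finset.sum_nonneg fun j _ => sq_nonneg _
  · have hsq : (Real.sqrt s)⁻¹ ^ 2 = s⁻¹ := by rw [inv_pow, Real.sq_sqrt hs0]
    have h : sMinSq M ≤ s⁻¹ * ∑ j, (Mᵀ.mulVec x j) ^ 2 := by
      refine csInf_le ⟨0, ?_⟩ ⟨(Real.sqrt s)⁻¹ • x, ?_, ?_⟩
      · rintro r ⟨v, -, rfl⟩
        exact Finset.sum_nonneg fun j _ => sq_nonneg _
      · simp only [Pi.smul_apply, smul_eq_mul, mul_pow, hsq]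
        rw [← Finset.mul_sum, ← hs, inv_mul_cancel₀ hpos.ne']
      · simp only [Matrix.mulVec_smul, Pi.smul_apply, smul_eq_mul, mul_pow, hsq]
        rw [← Finset.mul_sum]
    calc sMinSq M * s ≤ (s⁻¹ * ∑ j, (Mᵀ.mulVec x j) ^ 2) * s :=
          mul_le_mul_of_nonneg_right h hs0
      _ = _ := by field_simp

/-- Summation by parts, with the weights `w` indexed from `1` and the summands `c` from `0`. -/
lemma abel_sum (w c : ℕ → ℝ) (n : ℕ) (hn : 1 ≤ n) :
    ∑ j ∈ range n, w (j + 1) * c j =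
      ∑ t ∈ Ico 1 n, (w t - w (t + 1)) * ∑ j ∈ range t, c j + w n * ∑ j ∈ range n, c j := by
  induction n, hn using Nat.le_induction with
  | base => simp
  | succ n hn ih =>
    rw [Finset.sum_range_succ, ih, Finset.sum_Ico_succ_top hn, Finset.sum_range_succ c n]
    ring

/-- The partial sums of the squared coordinates of `(B Ũ)ᵀ x` are the squared norms of
`(B Ũ_{1:t})ᵀ x`; this also covers `t > n`, both sides being extended by zeros. -/
lemma sum_sq_firstCols {k m n : ℕ} (B : Matrix (Fin k) (Fin m) ℝ) (U : Matrix (Fin m) (Fin n) ℝ)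
    (x : Fin k → ℝ) (t : ℕ) :
    ∑ j : Fin t, ((B * firstCols U t)ᵀ.mulVec x j) ^ 2 =
      ∑ j ∈ range t, (if h : j < n then ((B * U)ᵀ.mulVec x ⟨j, h⟩) ^ 2 else 0) := by
  rw [Finset.sum_range]
  refine Finset.sum_congr rfl fun j _ => ?_
  by_cases h : (j : ℕ) < n <;>
    simp [h, firstCols, Matrix.mulVec, dotProduct, Matrix.mul_apply]

lemma dotProduct_vecMulVec_self {k : ℕ} (v x : Fin k → ℝ) :
    x ⬝ᵥ (Matrix.vecMulVec v v).mulVec x = (v ⬝ᵥ x) ^ 2 := by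
  rw [Matrix.vecMulVec_mulVec, dotProduct_smul, dotProduct_comm x v]
  simp [sq]

/-- **Telescoping Loewner lower bound.**
For `B ∈ ℝ^{k×m}`, `Ũ ∈ ℝ^{m×n}` with columns `ũ_1, …, ũ_n`, a nonincreasing nonnegative
sequence `σ 1 ≥ … ≥ σ n ≥ 0`, and `2k ≤ n`:
`∑_{t=1}^n σ t²·(Bũ_t)(Bũ_t)ᵀ ⪰
  (∑_{t=2k}^{n−1} (σ t² − σ (t+1)²)·σ_min²(B Ũ_{1:t}) + σ n²·σ_min²(B Ũ))·I_k`
in the Loewner order on `k × k` symmetric matrices. -/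
theorem telescoping_loewner_lower_bound (k m n : ℕ) (hk : 1 ≤ k) (hkn : 2 * k ≤ n)
    (B : Matrix (Fin k) (Fin m) ℝ) (U : Matrix (Fin m) (Fin n) ℝ) (σ : ℕ → ℝ)
    (hnonneg : ∀ i, 1 ≤ i → i ≤ n → 0 ≤ σ i)
    (hdec : ∀ i j, 1 ≤ i → i ≤ j → j ≤ n → σ j ≤ σ i) :
    ((∑ j : Fin n, σ ((j : ℕ) + 1) ^ 2 •
        Matrix.vecMulVec (B.mulVec fun i => U i j) (B.mulVec fun i => U i j)) -
      ((∑ t ∈ Icc (2 * k) (n - 1), (σ t ^ 2 - σ (t + 1) ^ 2) * sMinSq (B * firstCols U t))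
          + σ n ^ 2 * sMinSq (B * U)) • (1 : Matrix (Fin k) (Fin k) ℝ)).PosSemidef := by
  set w : ℕ → ℝ := fun t => σ t ^ 2 with hw
  have hherm : ∀ v : Fin k → ℝ, (Matrix.vecMulVec v v).IsHermitian := fun v => by
    ext i j
    simp [Matrix.vecMulVec_apply, mul_comm]
  refine Matrix.PosSemidef.of_dotProduct_mulVec_nonneg ?_ fun x => ?_
  · refine Matrix.IsHermitian.sub ?_ ?_
    · rw [Matrix.IsHermitian, Matrix.conjTranspose_sum]
      refine Finset.sum_congr rfl fun j _ => ?_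
      rw [Matrix.conjTranspose_smul, (hherm _).eq, star_trivial]
    · rw [Matrix.IsHermitian, Matrix.conjTranspose_smul, Matrix.conjTranspose_one, star_trivial]
  -- Extending the squared coordinates by zero lets the sums run over `ℕ`.
  · set c : ℕ → ℝ := fun j => if h : j < n then ((B * U)ᵀ.mulVec x ⟨j, h⟩) ^ 2 else 0 with hc
    have hc0 : ∀ j, 0 ≤ c j := fun j => by
      simp only [hc]
      split_ifs
      · exact sq_nonneg _
      · exact le_rfl
    have hquad : x ⬝ᵥ (∑ j : Fin n, σ ((j : ℕ) + 1) ^ 2 •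
        Matrix.vecMulVec (B.mulVec fun i => U i j) (B.mulVec fun i => U i j)).mulVec x =
        ∑ j ∈ range n, w (j + 1) * c j := by
      rw [Finset.sum_range, Matrix.sum_mulVec, dotProduct_sum]
      refine Finset.sum_congr rfl fun j _ => ?_
      rw [Matrix.smul_mulVec, dotProduct_smul, dotProduct_vecMulVec_self]
      simp [hw, hc, Matrix.mulVec, dotProduct, Matrix.mul_apply]
    have hlast : sMinSq (B * U) * ∑ i, x i ^ 2 ≤ ∑ j ∈ range n, c j := by
      refine (sMinSq_mul_le (B * U) x).trans_eq ?_
      rw [Finset.sum_range]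
      simp [hc]
    have hmid : ∀ t, sMinSq (B * firstCols U t) * ∑ i, x i ^ 2 ≤ ∑ j ∈ range t, c j := fun t =>
      (sMinSq_mul_le _ x).trans_eq (sum_sq_firstCols B U x t)
    have hwt : ∀ t ∈ Ico 1 n, 0 ≤ w t - w (t + 1) := fun t ht => by
      rw [Finset.mem_Ico] at ht
      exact sub_nonneg.2 (pow_le_pow_left₀ (hnonneg _ (by omega) (by omega))
        (hdec _ _ ht.1 (by omega) (by omega)) 2)
    have hsub : Icc (2 * k) (n - 1) ⊆ Ico 1 n := fun t ht => by
      rw [Finset.mem_Icc] at ht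
      rw [Finset.mem_Ico]
      omega
    have hsum : (∑ t ∈ Icc (2 * k) (n - 1), (w t - w (t + 1)) * sMinSq (B * firstCols U t)) *
        ∑ i, x i ^ 2 ≤ ∑ t ∈ Ico 1 n, (w t - w (t + 1)) * ∑ j ∈ range t, c j := by
      rw [Finset.sum_mul]
      refine (Finset.sum_le_sum fun t ht => ?_).trans
        (Finset.sum_le_sum_of_subset_of_nonneg hsub fun t ht _ =>
          mul_nonneg (hwt t ht) (Finset.sum_nonneg fun j _ => hc0 j))
      rw [mul_assoc]
      exact mul_le_mul_of_nonneg_left (hmid t) (hwt t (hsub ht))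
    have hn : w n * (sMinSq (B * U) * ∑ i, x i ^ 2) ≤ w n * ∑ j ∈ range n, c j :=
      mul_le_mul_of_nonneg_left hlast (sq_nonneg _)
    have hxx : x ⬝ᵥ x = ∑ i, x i ^ 2 := by simp [dotProduct, sq]
    rw [star_trivial, Matrix.sub_mulVec, dotProduct_sub, hquad, Matrix.smul_mulVec,
      Matrix.one_mulVec, dotProduct_smul, hxx, smul_eq_mul, abel_sum w c n (by omega), add_mul,
      mul_assoc]
    exact sub_nonneg.2 (add_le_add hsum hn)

end
end

section
/- Let σ₁ ≥ σ₂ ≥ … ≥ σ_n > 0 and let 1 ≤ ℓ < 2k ≤ n. Define κ̄_ℓ = ((1/(n−ℓ))·Σ_{i>ℓ} σ_i²/σ_n²)^{1/2}, κ̄_{ℓ:2k} = ((1/(2k−ℓ))·Σ_{i=ℓ+1}^{2k} σ_i²/σ_{2k}²)^{1/2}, κ_ℓ = σ_ℓ/σ_n, and κ_{ℓ:2k} = σ_ℓ/σ_{2k}. Then: κ̄_ℓ · κ̄_{ℓ:2k} ≤ κ_ℓ · √( (2k/n)·κ²_{ℓ:2k} + 1 ). -/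
open Finset

/-!
Both factors on the left are bounded separately. The second one averages terms `σ i ^ 2` with
`i > ℓ`, each at most `σ ℓ ^ 2`, so its square is at most `(σ ℓ / σ (2k)) ^ 2`. In the first one the
sum is split at `2k`: the `2k - ℓ` terms up to `2k` are at most `σ ℓ ^ 2`, the remaining `n - 2k`
terms are at most `σ (2k) ^ 2`. Since `(2k - ℓ) / (n - ℓ) ≤ 2k / n` and `(n - 2k) / (n - ℓ) ≤ 1`, its
square is at most `((2k / n) * σ ℓ ^ 2 + σ (2k) ^ 2) / σ n ^ 2`. The product of the two bounds is
exactly the square of the right-hand side.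
-/

theorem sum_sq_tail_le (n p q : ℕ) (σ : ℕ → ℝ)
    (hpos : ∀ i, 1 ≤ i → i ≤ n → 0 < σ i)
    (hdec : ∀ i j, 1 ≤ i → i ≤ j → j ≤ n → σ j ≤ σ i)
    (hp : 1 ≤ p) (hpq : p ≤ q) (hq : q ≤ n) :
    ∑ i ∈ Icc (p + 1) q, σ i ^ 2 ≤ ((q : ℝ) - p) * σ p ^ 2 := by
  have h : ∀ i ∈ Icc (p + 1) q, σ i ^ 2 ≤ σ p ^ 2 := by
    intro i hi
    rw [mem_Icc] at hi
    exact pow_le_pow_left₀ (hpos i (by omega) (by omega)).le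
      (hdec p i hp (by omega) (by omega)) 2
  have h2 := sum_le_card_nsmul _ _ _ h
  have hc : #(Icc (p + 1) q) = q - p := by rw [Nat.card_Icc]; omega
  rw [hc, nsmul_eq_mul, Nat.cast_sub hpq] at h2
  exact h2

/-- **Averaged condition numbers vs. spectral tail condition number.**
If `σ 1 ≥ … ≥ σ n > 0` and `1 ≤ ℓ < 2k ≤ n`, then
`κ̄_ℓ · κ̄_{ℓ:2k} ≤ κ_ℓ · √((2k/n)·κ_{ℓ:2k}² + 1)`, where
`κ̄_ℓ = ((1/(n−ℓ))·∑_{i>ℓ} σ i²/σ n²)^{1/2}`,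
`κ̄_{ℓ:2k} = ((1/(2k−ℓ))·∑_{i=ℓ+1}^{2k} σ i²/σ_{2k}²)^{1/2}`,
`κ_ℓ = σ ℓ / σ n` and `κ_{ℓ:2k} = σ ℓ / σ_{2k}`. -/
theorem avg_cond_le_tail_cond (n k ℓ : ℕ) (σ : ℕ → ℝ)
    (hpos : ∀ i, 1 ≤ i → i ≤ n → 0 < σ i)
    (hdec : ∀ i j, 1 ≤ i → i ≤ j → j ≤ n → σ j ≤ σ i)
    (hℓ1 : 1 ≤ ℓ) (hℓk : ℓ < 2 * k) (hkn : 2 * k ≤ n) :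
    Real.sqrt (((n : ℝ) - ℓ)⁻¹ * ∑ i ∈ Icc (ℓ + 1) n, σ i ^ 2 / σ n ^ 2) *
        Real.sqrt (((2 * k : ℝ) - ℓ)⁻¹ * ∑ i ∈ Icc (ℓ + 1) (2 * k), σ i ^ 2 / σ (2 * k) ^ 2)
      ≤ σ ℓ / σ n *
          Real.sqrt ((2 * k : ℝ) / n * (σ ℓ / σ (2 * k)) ^ 2 + 1) := by
  obtain ⟨m, hm⟩ : ∃ m, m = 2 * k := ⟨_, rfl⟩
  have hmR : (2 * k : ℝ) = m := by rw [hm]; push_cast; rfl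
  rw [hmR, ← hm]
  rw [← hm] at hℓk hkn
  have hl := hpos ℓ hℓ1 (by omega)
  have hs := hpos m (by omega) hkn
  have hn := hpos n (by omega) le_rfl
  have hlR : (1 : ℝ) ≤ ℓ := by exact_mod_cast hℓ1
  have hlm : (ℓ : ℝ) < m := by exact_mod_cast hℓk
  have hmn : (m : ℝ) ≤ n := by exact_mod_cast hkn
  have hn0 : (0 : ℝ) < n := by linarith
  have hnl : (0 : ℝ) < n - ℓ := by linarith
  have hml : (0 : ℝ) < m - ℓ := by linarith
  have hA := sum_sq_tail_le n ℓ m σ hpos hdec hℓ1 hℓk.le hkn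
  have hB := sum_sq_tail_le n m n σ hpos hdec (by omega) hkn le_rfl
  have hsplit : ∑ i ∈ Icc (ℓ + 1) n, σ i ^ 2 =
      ∑ i ∈ Icc (ℓ + 1) m, σ i ^ 2 + ∑ i ∈ Icc (m + 1) n, σ i ^ 2 := by
    rw [← sum_union]
    · congr 1
      ext i
      simp only [mem_union, mem_Icc]
      omega
    · rw [disjoint_left]
      intro i hi hi'
      rw [mem_Icc] at hi hi'
      omega
  have hY : ((m : ℝ) - ℓ)⁻¹ * ∑ i ∈ Icc (ℓ + 1) m, σ i ^ 2 / σ m ^ 2 ≤ (σ ℓ / σ m) ^ 2 := by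
    rw [← sum_div, inv_mul_le_iff₀ hml, div_pow, ← mul_div_assoc]
    gcongr
  have hX : ((n : ℝ) - ℓ)⁻¹ * ∑ i ∈ Icc (ℓ + 1) n, σ i ^ 2 / σ n ^ 2
      ≤ ((m : ℝ) / n * σ ℓ ^ 2 + σ m ^ 2) / σ n ^ 2 := by
    rw [← sum_div, inv_mul_le_iff₀ hnl, ← mul_div_assoc]
    gcongr
    rw [hsplit]
    have hfrac : (m : ℝ) - ℓ ≤ (n - ℓ) * (m / n) := by
      rw [← mul_div_assoc, le_div_iff₀ hn0]
      nlinarith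
    have hfirst : ((m : ℝ) - ℓ) * σ ℓ ^ 2 ≤ (n - ℓ) * (m / n) * σ ℓ ^ 2 := by gcongr
    have hsecond : ((n : ℝ) - m) * σ m ^ 2 ≤ (n - ℓ) * σ m ^ 2 := by gcongr
    linarith
  have hY0 : 0 ≤ ((m : ℝ) - ℓ)⁻¹ * ∑ i ∈ Icc (ℓ + 1) m, σ i ^ 2 / σ m ^ 2 := by positivity
  rw [← Real.sqrt_mul' _ hY0]
  apply Real.sqrt_le_iff.mpr
  refine ⟨by positivity, ?_⟩
  rw [mul_pow, Real.sq_sqrt (by positivity)]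
  calc _ ≤ ((m : ℝ) / n * σ ℓ ^ 2 + σ m ^ 2) / σ n ^ 2 * (σ ℓ / σ m) ^ 2 :=
        mul_le_mul hX hY hY0 (by positivity)
    _ = _ := by field_simp
end
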